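/- Let μ and ν be probability measures on ℝⁿ with finite first moments, let f* : ℝⁿ → ℝ be a 1-Lipschitz function maximizing ∫ f dμ − ∫ f dν over all 1-Lipschitz f, and let π* be a coupling of μ and ν minimizing ∫‖x−y‖ dπ. Then for π*-almost every pair (x, y) and every t ∈ [0,1], with x_t = t·x + (1−t)·y, one has f*(x_t) − f*(y) = t·‖x − y‖ and f*(x) − f*(x_t) = (1−t)·‖x − y‖; in particular |f*(x_t) − f*(y)| = ‖x_t − y‖ for all points x_t on the segment between coupled points. -/

import Mathlib

open MeasureTheory

/-!
Optimality of `π` forces its support to be cyclically monotone: if rearranging finitely many pairs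
of the support lowered the total cost, then by continuity rearranging random pairs drawn near them
would too, and a small multiple of this rearrangement could be performed inside `π`. For the
distance cost, maximizing the gain along chains of pairs of the support (Rockafellar's
construction) then gives a 1-Lipschitz `g` with `g x - g y = ‖x - y‖` on the support. Testing the
optimal critic against `g` gives `∫ (f x - f y) dπ = ∫ ‖x - y‖ dπ`, so the pointwise bound
`f x - f y ≤ ‖x - y‖` is an equality almost surely, and a 1-Lipschitz function which attains the
slope 1 between two points attains it along the whole segment.
-/

/-- A coupling `π` of `μ` and `ν` of minimal total cost for the cost function `c`. Only competitors
with integrable cost are considered, since the Bochner integral of any other cost is `0`. -/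
structure IsOptimalCoupling {X Y : Type*} [MeasurableSpace X] [MeasurableSpace Y] (c : X × Y → ℝ)
    (μ : Measure X) (ν : Measure Y) (π : Measure (X × Y)) : Prop where
  fst_eq : π.fst = μ
  snd_eq : π.snd = ν
  integrable : Integrable c π
  integral_le : ∀ π' : Measure (X × Y), π'.fst = μ → π'.snd = ν → Integrable c π' →
    ∫ p, c p ∂π ≤ ∫ p, c p ∂π'

/-- A maximizer of the Kantorovich dual problem between `μ` and `ν` for the distance cost. -/
structure IsOptimalCritic {X : Type*} [PseudoMetricSpace X] [MeasurableSpace X] (μ ν : Measure X)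
    (f : X → ℝ) : Prop where
  lipschitzWith : LipschitzWith 1 f
  integral_sub_le : ∀ g : X → ℝ, LipschitzWith 1 g →
    ∫ x, g x ∂μ - ∫ x, g x ∂ν ≤ ∫ x, f x ∂μ - ∫ x, f x ∂ν

/-- Cyclical monotonicity of a set of pairs with respect to the cost `c`: shifting the first
components along a finite cycle of pairs does not lower the total cost. The addition in
`Fin (n + 1)` is modular, so the successor of the last index is `0`. -/
def IsCyclicallyMonotone {X Y : Type*} (c : X × Y → ℝ) (S : Set (X × Y)) : Prop :=
  ∀ (n : ℕ) (p : Fin (n + 1) → X × Y), (∀ i, p i ∈ S) →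
    ∑ i, c (p i) ≤ ∑ i, c ((p (i + 1)).1, (p i).2)

section Exchange

open ProbabilityTheory

theorem cond_le_inv_smul {Ω : Type*} [MeasurableSpace Ω] (μ : Measure Ω) (s : Set Ω) :
    μ[|s] ≤ (μ s)⁻¹ • μ := by
  rw [ProbabilityTheory.cond]
  gcongr
  exact Measure.restrict_le_self

variable {X Y : Type*} [MeasurableSpace X] [MeasurableSpace Y] {c : X × Y → ℝ} {μ : Measure X}
  {ν : Measure Y} {π α β : Measure (X × Y)}

theorem IsOptimalCoupling.integral_le_of_le [IsFiniteMeasure π] (hπ : IsOptimalCoupling c μ ν π)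
    (hα : α ≤ π) (hfst : α.fst = β.fst) (hsnd : α.snd = β.snd) (hβ : Integrable c β) :
    ∫ p, c p ∂α ≤ ∫ p, c p ∂β := by
  have : IsFiniteMeasure α := isFiniteMeasure_of_le π hα
  have hsplit : π - α + α = π := Measure.sub_add_cancel_of_le hα
  have hα_int : Integrable c α := hπ.integrable.mono_measure hα
  have hrest_int : Integrable c (π - α) := hπ.integrable.mono_measure Measure.sub_le
  have hcompetitor : ∫ p, c p ∂π ≤ ∫ p, c p ∂(π - α + β) := by
    refine hπ.integral_le _ ?_ ?_ (hrest_int.add_measure hβ)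
    · rw [Measure.fst_add, ← hfst, ← Measure.fst_add, hsplit, hπ.fst_eq]
    · rw [Measure.snd_add, ← hsnd, ← Measure.snd_add, hsplit, hπ.snd_eq]
  rw [integral_add_measure hrest_int hβ] at hcompetitor
  have hcost : ∫ p, c p ∂π = ∫ p, c p ∂(π - α) + ∫ p, c p ∂α := by
    rw [← integral_add_measure hrest_int hα_int, hsplit]
  linarith

theorem IsOptimalCoupling.integral_le_of_le_smul [IsFiniteMeasure π]
    (hπ : IsOptimalCoupling c μ ν π) {C : ENNReal} (hC : C ≠ ⊤) (hα : α ≤ C • π)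
    (hfst : α.fst = β.fst) (hsnd : α.snd = β.snd) (hβ : Integrable c β) :
    ∫ p, c p ∂α ≤ ∫ p, c p ∂β := by
  -- Adding `1` makes the factor invertible.
  have hC₀ : C + 1 ≠ 0 := by simp
  have hC₁ : C + 1 ≠ ⊤ := by simpa using hC
  have hscaled : (C + 1)⁻¹ • α ≤ π := by
    calc (C + 1)⁻¹ • α ≤ (C + 1)⁻¹ • (C + 1) • π := by
          gcongr
          exact hα.trans (by gcongr; exact le_self_add)
      _ = π := by rw [smul_smul, ENNReal.inv_mul_cancel hC₀ hC₁, one_smul]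
  have hle := hπ.integral_le_of_le (β := (C + 1)⁻¹ • β) hscaled
    (by simp only [Measure.fst, Measure.map_smul] at hfst ⊢; rw [hfst])
    (by simp only [Measure.snd, Measure.map_smul] at hsnd ⊢; rw [hsnd])
    (hβ.smul_measure (ENNReal.inv_ne_top.2 hC₀))
  rw [integral_smul_measure, integral_smul_measure] at hle
  exact le_of_smul_le_smul_left hle
    (ENNReal.toReal_pos (ENNReal.inv_ne_zero.2 hC₁) (ENNReal.inv_ne_top.2 hC₀))

theorem fst_sum_map_perm {ι : Type*} [Fintype ι] (σ : Equiv.Perm ι) (Q : Measure (ι → X × Y)) :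
    (∑ i, Q.map fun q => ((q (σ i)).1, (q i).2)).fst = (∑ i, Q.map fun q => q i).fst := by
  have hmarginal (i : ι) :
      (Q.map fun q => ((q (σ i)).1, (q i).2)).fst = (Q.map fun q => q (σ i)).fst :=
    (Measure.fst_map_prodMk (by fun_prop)).trans
      (Measure.map_map measurable_fst (measurable_pi_apply (σ i))).symm
  simp only [← Measure.sum_fintype, Measure.fst_sum, hmarginal]
  simp only [Measure.sum_fintype]
  exact Equiv.sum_comp σ fun i => (Q.map fun q => q i).fst

theorem snd_sum_map_perm {ι : Type*} [Fintype ι] (σ : Equiv.Perm ι) (Q : Measure (ι → X × Y)) :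
    (∑ i, Q.map fun q => ((q (σ i)).1, (q i).2)).snd = (∑ i, Q.map fun q => q i).snd := by
  have hmarginal (i : ι) :
      (Q.map fun q => ((q (σ i)).1, (q i).2)).snd = (Q.map fun q => q i).snd :=
    (Measure.snd_map_prodMk (by fun_prop)).trans
      (Measure.map_map measurable_snd (measurable_pi_apply i)).symm
  simp only [← Measure.sum_fintype, Measure.snd_sum, hmarginal]

theorem IsOptimalCoupling.integral_sum_le_integral_sum_perm [IsFiniteMeasure π]
    (hπ : IsOptimalCoupling c μ ν π) (hc : Measurable c) {ι : Type*} [Fintype ι]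
    (σ : Equiv.Perm ι) {Q : Measure (ι → X × Y)} {C : ι → ENNReal} (hC : ∀ i, C i ≠ ⊤)
    (hQ : ∀ i, Q.map (fun q => q i) ≤ C i • π)
    (hint : ∀ i, Integrable (fun q => c ((q (σ i)).1, (q i).2)) Q) :
    ∫ q, ∑ i, c (q i) ∂Q ≤ ∫ q, ∑ i, c ((q (σ i)).1, (q i).2) ∂Q := by
  have heval (i : ι) : Measurable fun q : ι → X × Y => q i := measurable_pi_apply i
  have hpair (i : ι) : Measurable fun q : ι → X × Y => ((q (σ i)).1, (q i).2) := by fun_prop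
  have hmarginal_int (i : ι) : Integrable c (Q.map fun q => q i) :=
    (hπ.integrable.smul_measure (hC i)).mono_measure (hQ i)
  have hpair_int (i : ι) : Integrable c (Q.map fun q => ((q (σ i)).1, (q i).2)) :=
    (integrable_map_measure hc.aestronglyMeasurable (hpair i).aemeasurable).2 (hint i)
  have hle : ∑ i, Q.map (fun q => q i) ≤ (∑ i, C i) • π := by
    rw [Finset.sum_smul]
    exact Finset.sum_le_sum fun i _ => hQ i
  have hexchange := hπ.integral_le_of_le_smul (ENNReal.sum_ne_top.2 fun i _ => hC i) hle
    (fst_sum_map_perm σ Q).symm (snd_sum_map_perm σ Q).symm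
    (integrable_finsetSum_measure.2 fun i _ => hpair_int i)
  rw [integral_finsetSum_measure fun i _ => hmarginal_int i,
    integral_finsetSum_measure fun i _ => hpair_int i] at hexchange
  have heval_int (i : ι) : Integrable (fun q => c (q i)) Q :=
    (hmarginal_int i).comp_measurable (heval i)
  rw [integral_finsetSum _ fun i _ => heval_int i, integral_finsetSum _ fun i _ => hint i]
  simpa only [integral_map (heval _).aemeasurable hc.aestronglyMeasurable,
    integral_map (hpair _).aemeasurable hc.aestronglyMeasurable] using hexchange

theorem IsOptimalCoupling.exists_mem_sum_le_sum_perm [IsFiniteMeasure π]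
    (hπ : IsOptimalCoupling c μ ν π) (hc : Measurable c) {ι : Type*} [Fintype ι]
    (σ : Equiv.Perm ι) {W : ι → Set (X × Y)} (hW : ∀ i, MeasurableSet (W i))
    (hW_ne : ∀ i, π (W i) ≠ 0) {M : ι → ℝ}
    (hM : ∀ q : ι → X × Y, (∀ i, q i ∈ W i) → ∀ i, ‖c ((q (σ i)).1, (q i).2)‖ ≤ M i) :
    ∃ q : ι → X × Y, (∀ i, q i ∈ W i) ∧ ∑ i, c (q i) ≤ ∑ i, c ((q (σ i)).1, (q i).2) := by
  have hcond (i : ι) : IsProbabilityMeasure π[|W i] := cond_isProbabilityMeasure (hW_ne i)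
  let Q : Measure (ι → X × Y) := Measure.pi fun i => π[|W i]
  have hQ_eval (i : ι) : MeasurePreserving (fun q => q i) Q π[|W i] := measurePreserving_eval _ i
  have hQW : ∀ᵐ q ∂Q, ∀ i, q i ∈ W i :=
    ae_all_iff.2 fun i => (hQ_eval i).quasiMeasurePreserving.ae (ae_cond_mem (hW i))
  have hmass (i : ι) : (π (W i))⁻¹ ≠ ⊤ := ENNReal.inv_ne_top.2 (hW_ne i)
  have heval_int (i : ι) : Integrable (fun q => c (q i)) Q :=
    (hQ_eval i).integrable_comp_of_integrable
      ((hπ.integrable.smul_measure (hmass i)).mono_measure (cond_le_inv_smul π (W i)))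
  have hpair_int (i : ι) : Integrable (fun q => c ((q (σ i)).1, (q i).2)) Q := by
    refine .of_bound (hc.comp (by fun_prop)).aestronglyMeasurable (M i) ?_
    filter_upwards [hQW] with q hq using hM q hq i
  have hexchange : ∫ q, ∑ i, c (q i) ∂Q ≤ ∫ q, ∑ i, c ((q (σ i)).1, (q i).2) ∂Q :=
    hπ.integral_sum_le_integral_sum_perm hc σ hmass
      (fun i => (hQ_eval i).map_eq.trans_le (cond_le_inv_smul π (W i))) hpair_int
  have hsum_int := integrable_finsetSum Finset.univ fun i _ => heval_int i
  have hpair_sum_int := integrable_finsetSum Finset.univ fun i _ => hpair_int i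
  obtain ⟨q, hqW, hq⟩ := exists_notMem_null_le_integral (hsum_int.sub hpair_sum_int) (ae_iff.1 hQW)
  refine ⟨q, not_not.1 hqW, sub_nonpos.1 (hq.trans ?_)⟩
  rw [integral_sub' hsum_int hpair_sum_int]
  exact sub_nonpos.2 hexchange

end Exchange

section Support

variable {X Y : Type*} [TopologicalSpace X] [MeasurableSpace X] [OpensMeasurableSpace X]
  [TopologicalSpace Y] [MeasurableSpace Y] [OpensMeasurableSpace Y]
  [SecondCountableTopologyEither X Y] {c : X × Y → ℝ} {μ : Measure X} {ν : Measure Y}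
  {π : Measure (X × Y)} [IsFiniteMeasure π]

theorem IsOptimalCoupling.sum_le_sum_perm_of_mem_support (hπ : IsOptimalCoupling c μ ν π)
    (hc : Continuous c) {ι : Type*} [Fintype ι] (σ : Equiv.Perm ι) (p : ι → X × Y)
    (hp : ∀ i, p i ∈ π.support) :
    ∑ i, c (p i) ≤ ∑ i, c ((p (σ i)).1, (p i).2) := by
  by_contra! hlt
  let U : Set (ι → X × Y) :=
    {q | ∑ i, c ((q (σ i)).1, (q i).2) < ∑ i, c (q i)} ∩
      ⋂ i, {q | ‖c ((q (σ i)).1, (q i).2)‖ < ‖c ((p (σ i)).1, (p i).2)‖ + 1}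
  have hU : IsOpen U :=
    (isOpen_lt (by fun_prop) (by fun_prop)).inter
      (isOpen_iInter_of_finite fun i => isOpen_lt (by fun_prop) (by fun_prop))
  have hpU : p ∈ U := ⟨hlt, Set.mem_iInter.2 fun i => by simp⟩
  obtain ⟨W, hW, hWU⟩ := isOpen_pi_iff'.1 hU p hpU
  have hW_ne (i : ι) : π (W i) ≠ 0 :=
    ((Measure.mem_support_iff_forall _).1 (hp i) _ ((hW i).1.mem_nhds (hW i).2)).ne'
  obtain ⟨q, hqW, hq⟩ := hπ.exists_mem_sum_le_sum_perm hc.measurable σ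
    (fun i => (hW i).1.measurableSet) hW_ne
    fun q hq i => (Set.mem_iInter.1 (hWU fun j _ => hq j).2 i).le
  exact hq.not_gt (hWU fun i _ => hqW i).1

theorem IsOptimalCoupling.isCyclicallyMonotone_support (hπ : IsOptimalCoupling c μ ν π)
    (hc : Continuous c) : IsCyclicallyMonotone c π.support :=
  fun _ p hp => hπ.sum_le_sum_perm_of_mem_support hc (Equiv.addRight 1) p hp

end Support

section Potential

variable {X : Type*} [PseudoMetricSpace X]

/-- The gain of a chain `q₁, …, qₖ` of pairs from `z` to `x₀`: the distances inside the pairs minus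
the distances travelled from `z` to `q₁`, from each pair to the next and from `qₖ` to `x₀`. -/
noncomputable def chainGain (x₀ : X) : X → List (X × X) → ℝ
  | z, [] => -dist z x₀
  | z, q :: l => dist q.1 q.2 - dist z q.1 + chainGain x₀ q.2 l

theorem chainGain_le_add_dist (x₀ z w : X) (l : List (X × X)) :
    chainGain x₀ z l ≤ chainGain x₀ w l + dist z w := by
  cases l with
  | nil =>
    rw [chainGain, chainGain]
    linarith [dist_triangle_left w x₀ z]
  | cons q l =>
    rw [chainGain, chainGain]
    linarith [dist_triangle_left w q.1 z]

theorem chainGain_ofFn (x₀ z : X) {n : ℕ} (p : Fin (n + 1) → X × X) :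
    chainGain x₀ z (List.ofFn p) = ∑ i, dist (p i).1 (p i).2 - dist z (p 0).1
      - ∑ i : Fin n, dist (p i.succ).1 (p i.castSucc).2 - dist (p (Fin.last n)).2 x₀ := by
  induction n generalizing z with
  | zero => simp [chainGain, sub_eq_add_neg]
  | succ n ih =>
    rw [List.ofFn_succ, chainGain, ih, Fin.sum_univ_succ (fun i => dist (p i).1 (p i).2),
      Fin.sum_univ_succ (fun i : Fin (n + 1) => dist (p i.succ).1 (p i.castSucc).2),
      dist_comm (p 0).2]
    simp only [Fin.succ_last, Fin.castSucc_zero, Fin.succ_castSucc]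
    ring

theorem IsCyclicallyMonotone.chainGain_le_dist {S : Set (X × X)}
    (hS : IsCyclicallyMonotone (fun p => dist p.1 p.2) S) (x₀ z : X) {l : List (X × X)}
    (hl : ∀ q ∈ l, q ∈ S) : chainGain x₀ z l ≤ dist z x₀ := by
  rcases l with _ | ⟨q, l⟩
  · rw [chainGain]
    linarith [dist_nonneg (x := z) (y := x₀)]
  · let p : Fin (l.length + 1) → X × X := (q :: l).get
    have hp : List.ofFn p = q :: l := List.ofFn_get _
    have hcycle := hS l.length p fun i => hl _ (List.get_mem (q :: l) i)
    simp only [Fin.sum_univ_castSucc (fun i => dist (p (i + 1)).1 (p i).2), Fin.coeSucc_eq_succ,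
      Fin.last_add_one] at hcycle
    rw [← hp, chainGain_ofFn]
    have hclosing := dist_triangle4 (p 0).1 z x₀ (p (Fin.last _)).2
    linarith [dist_comm (p 0).1 z, dist_comm x₀ (p (Fin.last _)).2]

/-- The largest gain of a chain of pairs of `S` from a given point to `x₀`. The supremum is finite
when `S` is cyclically monotone, and it is then a Kantorovich potential. -/
noncomputable def chainPotential (S : Set (X × X)) (x₀ z : X) : ℝ :=
  ⨆ l : {l : List (X × X) // ∀ q ∈ l, q ∈ S}, chainGain x₀ z l

instance (S : Set (X × X)) : Nonempty {l : List (X × X) // ∀ q ∈ l, q ∈ S} :=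
  ⟨⟨[], by simp⟩⟩

variable {S : Set (X × X)}

theorem IsCyclicallyMonotone.bddAbove_range_chainGain
    (hS : IsCyclicallyMonotone (fun p => dist p.1 p.2) S) (x₀ z : X) :
    BddAbove (Set.range fun l : {l : List (X × X) // ∀ q ∈ l, q ∈ S} => chainGain x₀ z l) :=
  ⟨dist z x₀, Set.forall_mem_range.2 fun l => hS.chainGain_le_dist x₀ z l.2⟩

theorem IsCyclicallyMonotone.lipschitzWith_chainPotential
    (hS : IsCyclicallyMonotone (fun p => dist p.1 p.2) S) (x₀ : X) :
    LipschitzWith 1 (chainPotential S x₀) :=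
  .of_le_add fun z w => ciSup_le fun l =>
    (chainGain_le_add_dist x₀ z w l).trans
      (by gcongr; exact le_ciSup (hS.bddAbove_range_chainGain x₀ w) l)

theorem IsCyclicallyMonotone.dist_le_chainPotential_sub
    (hS : IsCyclicallyMonotone (fun p => dist p.1 p.2) S) (x₀ : X) {q : X × X} (hq : q ∈ S) :
    dist q.1 q.2 ≤ chainPotential S x₀ q.1 - chainPotential S x₀ q.2 := by
  suffices chainPotential S x₀ q.2 ≤ chainPotential S x₀ q.1 - dist q.1 q.2 by linarith
  refine ciSup_le fun l => ?_
  have hcons := le_ciSup (hS.bddAbove_range_chainGain x₀ q.1)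
    ⟨q :: l, List.forall_mem_cons.2 ⟨hq, l.2⟩⟩
  simp only [chainGain, dist_self, sub_zero] at hcons
  rw [chainPotential]
  linarith

end Potential

section Duality

theorem integrable_of_lipschitzWith {X F : Type*} [PseudoMetricSpace X] [MeasurableSpace X]
    [OpensMeasurableSpace X] [NormedAddCommGroup F] [SecondCountableTopologyEither X F]
    {μ : Measure X} [IsFiniteMeasure μ] {K : NNReal} {f : X → F} (hf : LipschitzWith K f) {x₀ : X}
    (hμ : Integrable (fun x => dist x x₀) μ) : Integrable f μ := by
  refine ((hμ.const_mul K).add (integrable_const ‖f x₀‖)).mono'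
    hf.continuous.aestronglyMeasurable (.of_forall fun x => ?_)
  calc ‖f x‖ ≤ ‖f x - f x₀‖ + ‖f x₀‖ := norm_le_norm_sub_add _ _
    _ ≤ K * dist x x₀ + ‖f x₀‖ := by
      gcongr
      exact (dist_eq_norm (f x) (f x₀)).ge.trans (hf.dist_le_mul x x₀)

theorem integrable_dist_of_integrable_dist_fst_snd {X : Type*} [PseudoMetricSpace X]
    [SecondCountableTopology X] [MeasurableSpace X] [OpensMeasurableSpace X]
    {π : Measure (X × X)} {x₀ : X} (hfst : Integrable (fun x => dist x x₀) π.fst)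
    (hsnd : Integrable (fun x => dist x x₀) π.snd) :
    Integrable (fun p => dist p.1 p.2) π := by
  refine ((hfst.comp_measurable measurable_fst).add (hsnd.comp_measurable measurable_snd)).mono'
    continuous_dist.aestronglyMeasurable (.of_forall fun p => ?_)
  rw [Real.norm_of_nonneg dist_nonneg]
  exact dist_triangle_right p.1 p.2 x₀

theorem integral_fst_sub_integral_snd {X : Type*} [MeasurableSpace X] {π : Measure (X × X)}
    {f : X → ℝ} (hfst : Integrable f π.fst) (hsnd : Integrable f π.snd) :
    ∫ x, f x ∂π.fst - ∫ x, f x ∂π.snd = ∫ p, (f p.1 - f p.2) ∂π := by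
  have hsub := integral_sub (hfst.comp_measurable measurable_fst)
    (hsnd.comp_measurable measurable_snd)
  rw [Measure.fst, Measure.snd,
    integral_map measurable_fst.aemeasurable hfst.aestronglyMeasurable,
    integral_map measurable_snd.aemeasurable hsnd.aestronglyMeasurable]
  exact hsub.symm

theorem sub_le_dist_of_lipschitzWith_one {X : Type*} [PseudoMetricSpace X] {f : X → ℝ}
    (hf : LipschitzWith 1 f) (x y : X) : f x - f y ≤ dist x y := by
  simpa only [NNReal.coe_one, one_mul] using (le_abs_self _).trans (hf.dist_le_mul x y)

variable {X : Type*} [PseudoMetricSpace X] [SecondCountableTopology X] [MeasurableSpace X]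
  [OpensMeasurableSpace X] {μ ν : Measure X} {π : Measure (X × X)} [IsFiniteMeasure π]

theorem IsOptimalCritic.ae_sub_eq_dist {f : X → ℝ} (hf : IsOptimalCritic μ ν f)
    (hπ : IsOptimalCoupling (fun p => dist p.1 p.2) μ ν π) {x₀ : X}
    (hμ : Integrable (fun x => dist x x₀) μ) (hν : Integrable (fun x => dist x x₀) ν) :
    ∀ᵐ p ∂π, f p.1 - f p.2 = dist p.1 p.2 := by
  obtain rfl := hπ.fst_eq
  obtain rfl := hπ.snd_eq
  have hint {h : X → ℝ} (hh : LipschitzWith 1 h) : Integrable (fun p => h p.1 - h p.2) π :=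
    ((integrable_of_lipschitzWith hh hμ).comp_measurable measurable_fst).sub
      ((integrable_of_lipschitzWith hh hν).comp_measurable measurable_snd)
  have hdual {h : X → ℝ} (hh : LipschitzWith 1 h) :
      ∫ x, h x ∂π.fst - ∫ x, h x ∂π.snd = ∫ p, (h p.1 - h p.2) ∂π :=
    integral_fst_sub_integral_snd (integrable_of_lipschitzWith hh hμ)
      (integrable_of_lipschitzWith hh hν)
  have hcyclic := hπ.isCyclicallyMonotone_support continuous_dist
  let g := chainPotential π.support x₀
  have hg : LipschitzWith 1 g := hcyclic.lipschitzWith_chainPotential x₀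
  have hle : ∀ᵐ p ∂π, f p.1 - f p.2 ≤ dist p.1 p.2 :=
    .of_forall fun p => sub_le_dist_of_lipschitzWith_one hf.lipschitzWith p.1 p.2
  have hge : ∫ p, dist p.1 p.2 ∂π ≤ ∫ p, (f p.1 - f p.2) ∂π :=
    calc ∫ p, dist p.1 p.2 ∂π ≤ ∫ p, (g p.1 - g p.2) ∂π := by
          refine integral_mono_ae hπ.integrable (hint hg) ?_
          filter_upwards [Measure.support_mem_ae] with p hp
            using hcyclic.dist_le_chainPotential_sub x₀ hp
      _ = ∫ x, g x ∂π.fst - ∫ x, g x ∂π.snd := (hdual hg).symm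
      _ ≤ ∫ x, f x ∂π.fst - ∫ x, f x ∂π.snd := hf.integral_sub_le g hg
      _ = ∫ p, (f p.1 - f p.2) ∂π := hdual hf.lipschitzWith
  exact (integral_eq_iff_of_ae_le (hint hf.lipschitzWith) hπ.integrable hle).1
    ((integral_mono_ae (hint hf.lipschitzWith) hπ.integrable hle).antisymm hge)

end Duality

section Segment

variable {E : Type*} [NormedAddCommGroup E] [NormedSpace ℝ E]

theorem unit_slope_on_segment_of_sub_eq_norm {f : E → ℝ} (hf : LipschitzWith 1 f) {x y : E}
    (hxy : f x - f y = ‖x - y‖) {t : ℝ} (ht : t ∈ Set.Icc (0 : ℝ) 1) :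
    f (t • x + (1 - t) • y) - f y = t * ‖x - y‖ ∧
    f x - f (t • x + (1 - t) • y) = (1 - t) * ‖x - y‖ ∧
    |f (t • x + (1 - t) • y) - f y| = ‖(t • x + (1 - t) • y) - y‖ := by
  have hnorm_left : ‖(t • x + (1 - t) • y) - y‖ = t * ‖x - y‖ := by
    rw [show (t • x + (1 - t) • y) - y = t • (x - y) by module, norm_smul,
      Real.norm_of_nonneg ht.1]
  have hnorm_right : ‖x - (t • x + (1 - t) • y)‖ = (1 - t) * ‖x - y‖ := by
    rw [show x - (t • x + (1 - t) • y) = (1 - t) • (x - y) by module, norm_smul,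
      Real.norm_of_nonneg (sub_nonneg.2 ht.2)]
  have hle_left := sub_le_dist_of_lipschitzWith_one hf (t • x + (1 - t) • y) y
  have hle_right := sub_le_dist_of_lipschitzWith_one hf x (t • x + (1 - t) • y)
  rw [dist_eq_norm, hnorm_left] at hle_left
  rw [dist_eq_norm, hnorm_right] at hle_right
  have hslope : f (t • x + (1 - t) • y) - f y = t * ‖x - y‖ := by linarith
  refine ⟨hslope, by linarith, ?_⟩
  rw [hslope, hnorm_left, abs_of_nonneg (mul_nonneg ht.1 (norm_nonneg _))]

theorem optimal_critic_unit_slope_on_coupled_segments_general [MeasurableSpace E]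
    [OpensMeasurableSpace E] [SecondCountableTopology E] {μ ν : Measure E}
    (hμ : Integrable (fun x => ‖x‖) μ) (hν : Integrable (fun x => ‖x‖) ν) {f : E → ℝ}
    (hf : LipschitzWith 1 f)
    (hfopt : ∀ g : E → ℝ, LipschitzWith 1 g →
        ∫ x, g x ∂μ - ∫ x, g x ∂ν ≤ ∫ x, f x ∂μ - ∫ x, f x ∂ν)
    {π : Measure (E × E)} [IsFiniteMeasure π] (hπ₁ : π.fst = μ) (hπ₂ : π.snd = ν)
    (hπopt : ∀ π' : Measure (E × E), π'.fst = μ → π'.snd = ν →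
        ∫ p, ‖p.1 - p.2‖ ∂π ≤ ∫ p, ‖p.1 - p.2‖ ∂π') :
    ∀ᵐ p ∂π, ∀ t ∈ Set.Icc (0 : ℝ) 1,
      f (t • p.1 + (1 - t) • p.2) - f p.2 = t * ‖p.1 - p.2‖ ∧
      f p.1 - f (t • p.1 + (1 - t) • p.2) = (1 - t) * ‖p.1 - p.2‖ ∧
      |f (t • p.1 + (1 - t) • p.2) - f p.2| = ‖(t • p.1 + (1 - t) • p.2) - p.2‖ := by
  simp only [← dist_zero_right] at hμ hν
  simp only [← dist_eq_norm] at hπopt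
  have hint : Integrable (fun p => dist p.1 p.2) π :=
    integrable_dist_of_integrable_dist_fst_snd (hπ₁ ▸ hμ) (hπ₂ ▸ hν)
  have hcritic : IsOptimalCritic μ ν f := ⟨hf, hfopt⟩
  have hcoupling : IsOptimalCoupling (fun p => dist p.1 p.2) μ ν π :=
    ⟨hπ₁, hπ₂, hint, fun π' hfst hsnd _ => hπopt π' hfst hsnd⟩
  filter_upwards [hcritic.ae_sub_eq_dist hcoupling hμ hν] with p hp t ht
  exact unit_slope_on_segment_of_sub_eq_norm hf (hp.trans (dist_eq_norm _ _)) ht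

end Segment

/-- **The optimal critic has unit slope along segments between optimally coupled
points.** For `π*`-almost every `(x, y)` and every `t ∈ [0,1]`, with
`x_t = t·x + (1−t)·y`, one has `f*(x_t) − f*(y) = t·‖x − y‖` and
`f*(x) − f*(x_t) = (1−t)·‖x − y‖`; in particular `|f*(x_t) − f*(y)| = ‖x_t − y‖`. -/
theorem optimal_critic_unit_slope_on_coupled_segments (n : ℕ)
    (μ ν : Measure (EuclideanSpace ℝ (Fin n)))
    [IsProbabilityMeasure μ] [IsProbabilityMeasure ν]
    (hμ : Integrable (fun x => ‖x‖) μ) (hν : Integrable (fun x => ‖x‖) ν)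
    (f : EuclideanSpace ℝ (Fin n) → ℝ) (hf : LipschitzWith 1 f)
    (hfopt : ∀ g : EuclideanSpace ℝ (Fin n) → ℝ, LipschitzWith 1 g →
        ∫ x, g x ∂μ - ∫ x, g x ∂ν ≤ ∫ x, f x ∂μ - ∫ x, f x ∂ν)
    (πs : Measure (EuclideanSpace ℝ (Fin n) × EuclideanSpace ℝ (Fin n)))
    [IsProbabilityMeasure πs]
    (hπ₁ : πs.map Prod.fst = μ) (hπ₂ : πs.map Prod.snd = ν)
    (hπopt : ∀ π : Measure (EuclideanSpace ℝ (Fin n) × EuclideanSpace ℝ (Fin n)),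
        IsProbabilityMeasure π → π.map Prod.fst = μ → π.map Prod.snd = ν →
          ∫ p, ‖p.1 - p.2‖ ∂πs ≤ ∫ p, ‖p.1 - p.2‖ ∂π) :
    ∀ᵐ p ∂πs, ∀ t ∈ Set.Icc (0 : ℝ) 1,
      f (t • p.1 + (1 - t) • p.2) - f p.2 = t * ‖p.1 - p.2‖ ∧
      f p.1 - f (t • p.1 + (1 - t) • p.2) = (1 - t) * ‖p.1 - p.2‖ ∧
      |f (t • p.1 + (1 - t) • p.2) - f p.2| = ‖(t • p.1 + (1 - t) • p.2) - p.2‖ := by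
  refine optimal_critic_unit_slope_on_coupled_segments_general hμ hν hf hfopt hπ₁ hπ₂
    fun π hfst hsnd => hπopt π ⟨?_⟩ hfst hsnd
  rw [← Measure.fst_univ, hfst, measure_univ]
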